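/- arXiv:1910.12738 — 3 statements merged into one kernel-verified Lean document; each statement's English description precedes it below -/
import Mathlib

section
/- For every integer n ≥ 4, every orientation of the cycle graph C_n admits a distinguishing arc-labelling with 2 labels. In particular, the arc-labelling assigning label 1 to exactly one arc and label 2 to all other arcs is distinguishing for every orientation of C_n. -/
/-- An orientation of a graph with adjacency relation `Adj`: an asymmetric relation whose
symmetric closure is exactly `Adj`. -/
def IsOrientation {V : Type*} (Adj : V → V → Prop) (A : V → V → Prop) : Prop :=
  (∀ u v, A u v → ¬ A v u) ∧ (∀ u v, (A u v ∨ A v u) ↔ Adj u v)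

/-- An automorphism of an oriented graph `A`. -/
def IsAutom {V : Type*} (A : V → V → Prop) (φ : Equiv.Perm V) : Prop :=
  ∀ u v, A u v ↔ A (φ u) (φ v)

/-- A distinguishing arc-labelling of an oriented graph `A` with `r` labels:
the only automorphism preserving all the arc labels is the identity. -/
def IsDistArcLabelling {V : Type*} (A : V → V → Prop) (r : ℕ) (lab : V → V → Fin r) : Prop :=
  ∀ φ : Equiv.Perm V, IsAutom A φ → (∀ u v, A u v → lab (φ u) (φ v) = lab u v) → φ = 1

/-- The adjacency relation of the cycle `C_n` on vertices `0, …, n-1` (n ≥ 3). -/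
def cycleAdj (n : ℕ) (u v : Fin n) : Prop :=
  (u.val + 1) % n = v.val ∨ (v.val + 1) % n = u.val

/-!
An automorphism preserving the labels must fix both ends of an arc whose label occurs on no other
arc. In a graph of maximum degree at most two, once a vertex and one of its neighbours are fixed,
the only other possible neighbour is fixed as well, so by connectedness everything is.
-/

section DegreeAtMostTwo

variable {V : Type*} {G : SimpleGraph V} [G.LocallyFinite]

theorem injective_hom_apply_eq_of_adj_of_degree_le_two {φ : G →g G} (hφ : Function.Injective φ)
    {u v w : V} (hdeg : G.degree v ≤ 2) (hvu : G.Adj v u) (hvw : G.Adj v w)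
    (hv : φ v = v) (hu : φ u = u) : φ w = w := by
  by_contra hw
  have huw : u ≠ w := by
    rintro rfl
    exact hw hu
  have huφw : u ≠ φ w := fun h => huw (hφ (hu.trans h))
  have hvφw : G.Adj v (φ w) := by simpa only [hv] using φ.map_adj hvw
  have three_neighbors : 2 < G.degree v := by
    rw [← G.card_neighborFinset_eq_degree]
    refine Finset.two_lt_card.2 ⟨u, ?_, w, ?_, φ w, ?_, huw, huφw, Ne.symm hw⟩ <;>
      rwa [G.mem_neighborFinset]
  exact three_neighbors.not_ge hdeg

theorem injective_hom_eq_id_of_adj_of_degree_le_two (hG : G.Preconnected)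
    (hdeg : ∀ v, G.degree v ≤ 2) {φ : G →g G} (hφ : Function.Injective φ) {a b : V}
    (hab : G.Adj a b) (ha : φ a = a) (hb : φ b = b) : φ = SimpleGraph.Hom.id := by
  have fixed_with_neighbor (v : V) : φ v = v ∧ ∃ u, G.Adj v u ∧ φ u = u := by
    induction (G.reachable_iff_reflTransGen a v).1 (hG a v) with
    | refl => exact ⟨ha, b, hab, hb⟩
    | @tail v w _ hvw ih =>
      obtain ⟨hv, u, hvu, hu⟩ := ih
      exact ⟨injective_hom_apply_eq_of_adj_of_degree_le_two hφ (hdeg v) hvu hvw hv hu,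
        v, hvw.symm, hv⟩
  ext v
  exact (fixed_with_neighbor v).1

end DegreeAtMostTwo

theorem IsAutom.adj_apply {V : Type*} {Adj A : V → V → Prop} {φ : Equiv.Perm V}
    (hφ : IsAutom A φ) (hA : IsOrientation Adj A) {u v : V} (huv : Adj u v) :
    Adj (φ u) (φ v) :=
  (hA.2 _ _).1 (((hA.2 u v).2 huv).imp (hφ u v).1 (hφ v u).1)

theorem cycle_orientation_distinguishing_two_arc_labelling_general {V : Type*}
    {G : SimpleGraph V} [G.LocallyFinite] (hG : G.Preconnected) (hdeg : ∀ v, G.degree v ≤ 2)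
    {A : V → V → Prop} (hA : IsOrientation G.Adj A) {a b : V} (hab : A a b)
    {r : ℕ} {lab : V → V → Fin r}
    (hlab : ∀ u v, A u v → lab u v = lab a b → u = a ∧ v = b) :
    IsDistArcLabelling A r lab := by
  intro φ hφ hpres
  obtain ⟨ha, hb⟩ : φ a = a ∧ φ b = b :=
    hlab (φ a) (φ b) ((hφ a b).1 hab) (hpres a b hab)
  let f : G →g G := ⟨φ, hφ.adj_apply hA⟩
  have hf : f = SimpleGraph.Hom.id :=
    injective_hom_eq_id_of_adj_of_degree_le_two hG hdeg φ.injective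
      ((hA.2 a b).1 (Or.inl hab)) ha hb
  ext v
  exact DFunLike.congr_fun hf v

theorem cycleAdj_eq_cycleGraph_adj (n : ℕ) :
    cycleAdj (n + 2) = (SimpleGraph.cycleGraph (n + 2)).Adj := by
  ext u v
  rw [SimpleGraph.cycleGraph_adj, sub_eq_iff_eq_add', sub_eq_iff_eq_add', or_comm]
  simp [cycleAdj, Fin.ext_iff, Fin.val_add, eq_comm]

/-- For every integer `n ≥ 4`, every orientation of the cycle `C_n` admits a
distinguishing arc-labelling with 2 labels; in particular, the arc-labelling assigning
label 1 (here `0 : Fin 2`) to exactly one arc `(a, b)` and label 2 (here `1 : Fin 2`) to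
all the other arcs is distinguishing. -/
theorem cycle_orientation_distinguishing_two_arc_labelling (n : ℕ) (hn : 4 ≤ n)
    (A : Fin n → Fin n → Prop) (hA : IsOrientation (cycleAdj n) A)
    (a b : Fin n) (hab : A a b) :
    IsDistArcLabelling A 2 (fun u v => if u = a ∧ v = b then 0 else 1) ∧
    ∃ lab : Fin n → Fin n → Fin 2, IsDistArcLabelling A 2 lab := by
  obtain ⟨m, rfl⟩ := Nat.exists_eq_add_of_le' hn
  rw [cycleAdj_eq_cycleGraph_adj] at hA
  have h : IsDistArcLabelling A 2 (fun u v => if u = a ∧ v = b then 0 else 1) :=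
    cycle_orientation_distinguishing_two_arc_labelling_general
      SimpleGraph.cycleGraph_preconnected
      (fun _ => SimpleGraph.cycleGraph_degree_three_le.le) hA hab (by simp)
  exact ⟨h, _, h⟩
end

section
/- For every integer n ≥ 2, every orientation of the balanced complete bipartite graph K_{n,n} admits a distinguishing arc-labelling with 2 labels. In particular, the labelling that assigns label 1 to the arc joining x_i and y_j (in whichever direction it is oriented) if and only if j < i, and label 2 otherwise, is distinguishing for every orientation of K_{n,n}. -/
/-- The adjacency relation of the complete bipartite graph `K_{m,n}`, with parts
`X = Fin m` (the left summand) and `Y = Fin n` (the right summand). -/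
def bipAdj (m n : ℕ) (u v : Sum (Fin m) (Fin n)) : Prop :=
  u.isLeft ≠ v.isLeft

/-- The arc-labelling of `K_{n,n}` assigning label 1 (here `0 : Fin 2`) to the arc
joining `x_i` and `y_j` (in whichever direction it is oriented) if and only if `j < i`,
and label 2 (here `1 : Fin 2`) otherwise. -/
def knnArcLab (n : ℕ) : Sum (Fin n) (Fin n) → Sum (Fin n) (Fin n) → Fin 2
  | Sum.inl i, Sum.inr j => if j < i then 0 else 1
  | Sum.inr j, Sum.inl i => if j < i then 0 else 1
  | _, _ => 1

/-!
Call the number of arcs at a vertex carrying a given label its label degree; every automorphism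
preserving the labels preserves it. Under `knnArcLab`, exactly `i` arcs at `x_i` and exactly
`n - 1 - j` arcs at `y_j` carry the first label (indices starting at `0`), so the only vertex other
than `u` with the same label degree as `u` lies in the other part. An automorphism moving `u` would
therefore swap `u` with this adjacent vertex and reverse the arc between them.
-/

section Orientation

variable {V : Type*} {Adj A : V → V → Prop} {φ : Equiv.Perm V}

theorem IsAutom.not_swap_of_adj (hφ : IsAutom A φ) (hA : IsOrientation Adj A) {u v : V}
    (huv : Adj u v) : ¬(φ u = v ∧ φ v = u) := by
  rintro ⟨hu, hv⟩
  have reversed : A u v ↔ A v u := by simpa only [hu, hv] using hφ u v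
  rcases (hA.2 u v).2 huv with h | h
  · exact hA.1 u v h (reversed.1 h)
  · exact hA.1 v u h (reversed.2 h)

theorem IsAutom.eq_one_of_invariant {α : Type*} {d : V → α} {σ : V → V} (hφ : IsAutom A φ)
    (hA : IsOrientation Adj A) (hσ : ∀ u, Adj u (σ u)) (hdφ : ∀ u, d (φ u) = d u)
    (hd : ∀ u v, d v = d u → v = u ∨ v = σ u) : φ = 1 := by
  ext u
  by_contra hu
  have hφu : φ u = σ u := (hd u (φ u) (hdφ u)).resolve_left hu
  have hφφu : φ (φ u) = u := by
    refine (hd u (φ (φ u)) ((hdφ _).trans (hdφ u))).resolve_right fun h => hu ?_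
    exact φ.injective (h.trans hφu.symm)
  exact hφ.not_swap_of_adj hA (hσ u) ⟨hφu, hφu ▸ hφφu⟩

end Orientation

section LabelDegree

variable {V L : Type*}

/-- The vertices joined to `u` by an arc of `A`, in either direction, whose label is `k`. -/
def labelNeighborSet (A : V → V → Prop) (lab : V → V → L) (k : L) (u : V) : Set V :=
  {v | A u v ∧ lab u v = k ∨ A v u ∧ lab v u = k}

/-- The number of vertices joined to `u` by an arc labelled `k`, as an extended natural number so
that infinite degrees make sense. It is the invariant separating the vertices of an orientation. -/
noncomputable def labelDegree (A : V → V → Prop) (lab : V → V → L) (k : L) (u : V) : ℕ∞ :=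
  (labelNeighborSet A lab k u).encard

variable {A : V → V → Prop} {lab : V → V → L} {φ : Equiv.Perm V}

theorem IsAutom.apply_mem_labelNeighborSet_iff (hφ : IsAutom A φ)
    (hlab : ∀ u v, A u v → lab (φ u) (φ v) = lab u v) (k : L) (u v : V) :
    φ v ∈ labelNeighborSet A lab k (φ u) ↔ v ∈ labelNeighborSet A lab k u := by
  have harc (a b : V) : A (φ a) (φ b) ∧ lab (φ a) (φ b) = k ↔ A a b ∧ lab a b = k := by
    rw [← hφ a b]
    exact and_congr_right fun h => by rw [hlab a b h]
  exact or_congr (harc u v) (harc v u)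

theorem IsAutom.labelDegree_apply (hφ : IsAutom A φ)
    (hlab : ∀ u v, A u v → lab (φ u) (φ v) = lab u v) (k : L) (u : V) :
    labelDegree A lab k (φ u) = labelDegree A lab k u :=
  (Set.encard_congr
    (φ.subtypeEquiv fun v => (hφ.apply_mem_labelNeighborSet_iff hlab k u v).symm)).symm

end LabelDegree

theorem IsDistArcLabelling.of_labelDegree {V : Type*} {Adj A : V → V → Prop} {r : ℕ}
    {lab : V → V → Fin r} {k : Fin r} {σ : V → V} (hA : IsOrientation Adj A)
    (hσ : ∀ u, Adj u (σ u))
    (hdeg : ∀ u v, labelDegree A lab k v = labelDegree A lab k u → v = u ∨ v = σ u) :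
    IsDistArcLabelling A r lab := fun _ hφ hlab =>
  hφ.eq_one_of_invariant hA hσ (hφ.labelDegree_apply hlab k) hdeg

section CompleteBipartite

variable {n : ℕ}

/-- The vertex in the part of `K_{n,n}` not containing `u` with reversed index: it exchanges `x_i`
and `y_{n-1-i}`, indices starting at `0`. -/
def mirror (u : Fin n ⊕ Fin n) : Fin n ⊕ Fin n :=
  (u.map Fin.rev Fin.rev).swap

theorem bipAdj_mirror (u : Fin n ⊕ Fin n) : bipAdj n n u (mirror u) := by
  cases u <;> simp [bipAdj, mirror]

theorem eq_or_eq_mirror_of_elim_rev_eq {u v : Fin n ⊕ Fin n}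
    (h : Sum.elim id Fin.rev v = Sum.elim id Fin.rev u) : v = u ∨ v = mirror u := by
  rcases u with i | i <;> rcases v with j | j <;> simpa [mirror, Fin.rev_eq_iff] using h

variable {A : Fin n ⊕ Fin n → Fin n ⊕ Fin n → Prop}

theorem labelNeighborSet_knnArcLab_inl (hA : IsOrientation (bipAdj n n) A) (i : Fin n) :
    labelNeighborSet A (knnArcLab n) 0 (.inl i) = Sum.inr '' Set.Iio i := by
  ext (i' | j)
  · simp [labelNeighborSet, knnArcLab]
  · have hadj : A (.inl i) (.inr j) ∨ A (.inr j) (.inl i) := (hA.2 _ _).2 (by simp [bipAdj])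
    simp [labelNeighborSet, knnArcLab, ← or_and_right, hadj]

theorem labelNeighborSet_knnArcLab_inr (hA : IsOrientation (bipAdj n n) A) (j : Fin n) :
    labelNeighborSet A (knnArcLab n) 0 (.inr j) = Sum.inl '' Set.Ioi j := by
  ext (i | j')
  · have hadj : A (.inr j) (.inl i) ∨ A (.inl i) (.inr j) := (hA.2 _ _).2 (by simp [bipAdj])
    simp [labelNeighborSet, knnArcLab, ← or_and_right, hadj]
  · simp [labelNeighborSet, knnArcLab]

theorem labelDegree_knnArcLab (hA : IsOrientation (bipAdj n n) A) (u : Fin n ⊕ Fin n) :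
    labelDegree A (knnArcLab n) 0 u = (Sum.elim id Fin.rev u : Fin n).val := by
  rcases u with i | j
  · rw [labelDegree, labelNeighborSet_knnArcLab_inl hA, Sum.inr_injective.encard_image,
      ← Finset.coe_Iio, Set.encard_coe_eq_coe_finsetCard, Fin.card_Iio, Sum.elim_inl, id]
  · rw [labelDegree, labelNeighborSet_knnArcLab_inr hA, Sum.inl_injective.encard_image,
      ← Finset.coe_Ioi, Set.encard_coe_eq_coe_finsetCard, Fin.card_Ioi, Sum.elim_inr, Fin.val_rev,
      Nat.sub_sub, Nat.add_comm]

theorem isDistArcLabelling_knnArcLab (hA : IsOrientation (bipAdj n n) A) :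
    IsDistArcLabelling A 2 (knnArcLab n) := by
  refine .of_labelDegree (k := 0) hA bipAdj_mirror fun u v h => ?_
  rw [labelDegree_knnArcLab hA, labelDegree_knnArcLab hA, Nat.cast_inj, Fin.val_inj] at h
  exact eq_or_eq_mirror_of_elim_rev_eq h

end CompleteBipartite

/-- For every `n ≥ 2`, every orientation of `K_{n,n}` admits a distinguishing
arc-labelling with 2 labels; in particular the labelling `knnArcLab n` is
distinguishing for every orientation of `K_{n,n}`. -/
theorem balanced_complete_bipartite_dist_arc_labelling (n : ℕ) (hn : 2 ≤ n)
    (A : Sum (Fin n) (Fin n) → Sum (Fin n) (Fin n) → Prop)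
    (hA : IsOrientation (bipAdj n n) A) :
    IsDistArcLabelling A 2 (knnArcLab n) ∧
    ∃ lab : Sum (Fin n) (Fin n) → Sum (Fin n) (Fin n) → Fin 2,
      IsDistArcLabelling A 2 lab :=
  ⟨isDistArcLabelling_knnArcLab hA, knnArcLab n, isDistArcLabelling_knnArcLab hA⟩
end

section
/- Let m, n be integers with 3 ≤ m < n ≤ 2^m and let A be an orientation of the complete bipartite graph K_{m,n} having no pair of distinct full twin vertices in Y. Then every automorphism of A that fixes every vertex of X is the identity. Consequently, if the in-degrees of the vertices of X in A are pairwise distinct, then A is rigid. -/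
/-- An oriented graph is rigid if its only automorphism is the identity. -/
def IsRigid {V : Type*} (A : V → V → Prop) : Prop :=
  ∀ φ : Equiv.Perm V, IsAutom A φ → φ = 1

/-!
An automorphism fixing `X` pointwise preserves the out-neighbourhood of every vertex of `Y`, so it
moves each vertex of `Y` to a full twin. If the in-degrees on `X` are distinct, an automorphism that
preserves `X` fixes it pointwise, hence is the identity. An arbitrary automorphism `φ` preserves or
swaps the parts, so `φ²` preserves `X` and `φ` is an involution. An involutive automorphism cannot
send a vertex `u` to a neighbour, because it would reverse the edge between `u` and `φ u`; hence `φ`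
itself preserves `X`.
-/

section Orientation

open Cardinal

variable {V : Type*} {Adj A : V → V → Prop} {φ ψ : Equiv.Perm V}

theorem injective_of_forall_ne_not_iff {ι : Type*} {f : ι → V}
    (htwins : ∀ i j, i ≠ j → ¬ ∀ w, A (f i) w ↔ A (f j) w) :
    Function.Injective fun i => A (f i) :=
  fun i j h => not_ne_iff.1 fun hne => htwins i j hne fun w => iff_of_eq (congrFun h w)

theorem IsAutom.mul (hφ : IsAutom A φ) (hψ : IsAutom A ψ) : IsAutom A (φ * ψ) :=
  fun u v => (hψ u v).trans (hφ (ψ u) (ψ v))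

-- In-degrees are cardinals here, since `Set.ncard` is `0` on every infinite set.
theorem IsAutom.mk_inNeighbors_apply (hφ : IsAutom A φ) (v : V) :
    #{w // A w (φ v)} = #{w // A w v} :=
  (φ.subtypeEquiv fun w => hφ w v).cardinal_eq.symm

theorem IsAutom.apply_eq_self_of_injOn_mk_inNeighbors (hφ : IsAutom A φ) {S : Set V}
    (hdeg : S.InjOn fun v => #{w // A w v}) {v : V} (hv : v ∈ S) (hφv : φ v ∈ S) : φ v = v :=
  hdeg hφv hv (hφ.mk_inNeighbors_apply v)

theorem IsAutom.eq_one_of_injOn_of_fixes_compl (hφ : IsAutom A φ) {T : Set V}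
    (hindep : ∀ u ∈ T, ∀ v ∈ T, ¬ A u v) (htwins : T.InjOn A) (hfix : ∀ v ∉ T, φ v = v) :
    φ = 1 := by
  ext v
  by_cases hv : v ∈ T
  · by_cases hφv : φ v ∈ T
    · have htwin : A (φ v) = A v := by
        ext w
        by_cases hw : w ∈ T
        · exact iff_of_false (hindep _ hφv _ hw) (hindep _ hv _ hw)
        · simpa only [hfix w hw] using (hφ v w).symm
      exact htwins hφv hv htwin
    · exact φ.injective (hfix (φ v) hφv)
  · exact hfix v hv

theorem IsAutom.adj_iff (hφ : IsAutom A φ) (hA : IsOrientation Adj A) (u v : V) :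
    Adj (φ u) (φ v) ↔ Adj u v := by
  rw [← hA.2, ← hA.2, ← hφ, ← hφ]

theorem IsAutom.not_adj_apply_of_apply_apply_eq_self (hφ : IsAutom A φ)
    (hA : IsOrientation Adj A) {u : V} (hu : φ (φ u) = u) : ¬ Adj u (φ u) := by
  have hrev : A u (φ u) ↔ A (φ u) u := by simpa only [hu] using hφ u (φ u)
  rw [← hA.2, ← hrev, or_self]
  exact fun h => hA.1 _ _ h (hrev.1 h)

end Orientation

section CompleteBipartite

open Cardinal Function

variable {α β : Type*} {A : α ⊕ β → α ⊕ β → Prop} {φ : Equiv.Perm (α ⊕ β)}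

theorem completeBipartiteGraph_adj_iff_isLeft_ne {u v : α ⊕ β} :
    (completeBipartiteGraph α β).Adj u v ↔ u.isLeft ≠ v.isLeft := by
  cases u <;> cases v <;> simp

theorem bipAdj_eq_completeBipartiteGraph_adj (m n : ℕ) :
    bipAdj m n = (completeBipartiteGraph (Fin m) (Fin n)).Adj := by
  ext u v
  exact completeBipartiteGraph_adj_iff_isLeft_ne.symm

theorem IsAutom.isLeft_apply_apply (hφ : IsAutom A φ)
    (hA : IsOrientation (completeBipartiteGraph α β).Adj A) (u : α ⊕ β) :
    (φ (φ u)).isLeft = u.isLeft := by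
  have hadj : (φ u).isLeft ≠ (φ (φ u)).isLeft ↔ u.isLeft ≠ (φ u).isLeft := by
    simpa only [completeBipartiteGraph_adj_iff_isLeft_ne] using hφ.adj_iff hA u (φ u)
  grind

theorem IsAutom.eq_one_of_injective_of_fixes_inl (hφ : IsAutom A φ)
    (hA : IsOrientation (completeBipartiteGraph α β).Adj A)
    (htwins : Injective fun b => A (Sum.inr b)) (hfix : ∀ a, φ (Sum.inl a) = Sum.inl a) :
    φ = 1 := by
  refine hφ.eq_one_of_injOn_of_fixes_compl (T := Set.range Sum.inr) ?_ htwins.injOn_range ?_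
  · rintro _ ⟨b, rfl⟩ _ ⟨b', rfl⟩ h
    exact completeBipartiteGraph_adj_iff_isLeft_ne.1 ((hA.2 _ _).1 (.inl h)) rfl
  · rintro (a | b) hv
    · exact hfix a
    · exact absurd (Set.mem_range_self b) hv

theorem isRigid_of_injective_mk_inNeighbors
    (hA : IsOrientation (completeBipartiteGraph α β).Adj A)
    (htwins : Injective fun b => A (Sum.inr b))
    (hdeg : Injective fun a : α => #{w // A w (Sum.inl a)}) : IsRigid A := by
  intro φ hφ
  have hdegX : (Set.range Sum.inl).InjOn fun v => #{w // A w v} := Injective.injOn_range hdeg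
  have eq_one_of_isLeft : ∀ ψ : Equiv.Perm (α ⊕ β), IsAutom A ψ →
      (∀ u, (ψ u).isLeft = u.isLeft) → ψ = 1 := by
    intro ψ hψ hside
    refine hψ.eq_one_of_injective_of_fixes_inl hA htwins fun a => ?_
    obtain ⟨a', ha'⟩ := Sum.isLeft_iff.1 (hside (Sum.inl a))
    exact hψ.apply_eq_self_of_injOn_mk_inNeighbors hdegX ⟨a, rfl⟩ ⟨a', ha'.symm⟩
  have hsq : φ * φ = 1 := eq_one_of_isLeft _ (hφ.mul hφ) (hφ.isLeft_apply_apply hA)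
  refine eq_one_of_isLeft φ hφ fun u => ?_
  have hnadj := hφ.not_adj_apply_of_apply_apply_eq_self hA (Equiv.Perm.congr_fun hsq u)
  exact (not_ne_iff.1 (completeBipartiteGraph_adj_iff_isLeft_ne.not.1 hnadj)).symm

theorem no_full_twins_act_on_X_general
    (hA : IsOrientation (completeBipartiteGraph α β).Adj A)
    (htwins : Injective fun b => A (Sum.inr b)) :
    (∀ φ : Equiv.Perm (α ⊕ β), IsAutom A φ →
      (∀ a, φ (Sum.inl a) = Sum.inl a) → φ = 1) ∧
    ((Injective fun a : α => #{w // A w (Sum.inl a)}) → IsRigid A) :=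
  ⟨fun _ hφ => hφ.eq_one_of_injective_of_fixes_inl hA htwins,
    isRigid_of_injective_mk_inNeighbors hA htwins⟩

end CompleteBipartite

/-- Let `3 ≤ m < n ≤ 2^m` and let `A` be an orientation of `K_{m,n}` having no pair of
distinct full twin vertices in `Y`. Then every automorphism of `A` fixing every vertex
of `X` is the identity; consequently, if the in-degrees of the vertices of `X` are
pairwise distinct, then `A` is rigid. -/
theorem no_full_twins_act_on_X (m n : ℕ) (hm : 3 ≤ m) (hmn : m < n) (hn : n ≤ 2 ^ m)
    (A : Sum (Fin m) (Fin n) → Sum (Fin m) (Fin n) → Prop)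
    (hA : IsOrientation (bipAdj m n) A)
    (htwins : ∀ j j' : Fin n, j ≠ j' → ¬ (∀ w, A (Sum.inr j) w ↔ A (Sum.inr j') w)) :
    (∀ φ : Equiv.Perm (Sum (Fin m) (Fin n)), IsAutom A φ →
      (∀ i : Fin m, φ (Sum.inl i) = Sum.inl i) → φ = 1) ∧
    ((∀ i i' : Fin m,
        ({w | A w (Sum.inl i)} : Set (Sum (Fin m) (Fin n))).ncard =
          ({w | A w (Sum.inl i')} : Set (Sum (Fin m) (Fin n))).ncard → i = i') →
      IsRigid A) := by
  have hA' := bipAdj_eq_completeBipartiteGraph_adj m n ▸ hA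
  exact (no_full_twins_act_on_X_general hA' (injective_of_forall_ne_not_iff htwins)).imp_right
    fun hrigid hdeg => hrigid fun i i' h => hdeg i i' (Set.ncard_congr' (Cardinal.eq.1 h).some)
end
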